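/- Let Φ be a Young function of class Δ₂ and let f satisfy (H₁)–(H₄). For each integer n ≥ 1 let f_n be the regularized integrand obtained by mollification in the last variable. Then for every measurable vector field v : Q×Ω×ℝ^N → ℝ^N, ℤ^N-periodic in the last variable and with ∫_{Q×Ω×Y} Φ(|v|) dx dμ dy < ∞, one has ∫_{Q×Ω×Y} |f_n(x,ω,y,v(x,ω,y)) − f(x,ω,y,v(x,ω,y))| dx dμ(ω) dy → 0 as n → ∞. -/

import Mathlib

open MeasureTheory Filter Topology ENNReal

noncomputable section

/-- Euclidean norm on `Fin N → ℝ`. -/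
def enorm2 {N : ℕ} (v : Fin N → ℝ) : ℝ := Real.sqrt (∑ i, v i ^ 2)

/-- `Φ : [0,∞) → [0,∞)` is a Young function: continuous, convex, positive on `(0,∞)`,
with `Φ(t)/t → 0` as `t → 0⁺` and `Φ(t)/t → ∞` as `t → ∞` (so `Φ(0) = 0`). -/
def IsYoung (Φ : ℝ → ℝ) : Prop :=
  ContinuousOn Φ (Set.Ici 0) ∧ ConvexOn ℝ (Set.Ici 0) Φ ∧ Φ 0 = 0 ∧
    (∀ t : ℝ, 0 < t → 0 < Φ t) ∧ (∀ t : ℝ, 0 ≤ t → 0 ≤ Φ t) ∧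
    Tendsto (fun t => Φ t / t) (nhdsWithin 0 (Set.Ioi 0)) (nhds 0) ∧
    Tendsto (fun t => Φ t / t) atTop atTop

/-- The `Δ₂`-condition (at infinity). -/
def Delta2 (Φ : ℝ → ℝ) : Prop :=
  ∃ α : ℝ, 0 < α ∧ ∃ t₀ : ℝ, 0 ≤ t₀ ∧ ∀ t : ℝ, t₀ ≤ t → Φ (2 * t) ≤ α * Φ t

/-- The `Δ'`-condition (at infinity). -/
def DeltaPrime (Φ : ℝ → ℝ) : Prop :=
  ∃ k : ℝ, 0 < k ∧ ∃ t₀ s₀ : ℝ, 0 ≤ t₀ ∧ 0 ≤ s₀ ∧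
    ∀ t s : ℝ, t₀ ≤ t → s₀ ≤ s → Φ (t * s) ≤ k * Φ t * Φ s

/-- The conjugate Young function `Φ̃(t) = sup_{s ≥ 0} (st − Φ(s))`. -/
def conjY (Φ : ℝ → ℝ) (t : ℝ) : ℝ := sSup ((fun s => s * t - Φ s) '' Set.Ici 0)

/-- The Luxemburg norm `‖u‖_{Φ,X} = inf {δ > 0 : ∫_X Φ(|u|/δ) dν ≤ 1}` (`+∞` if no such `δ`). -/
def luxNorm {X : Type*} [MeasurableSpace X] (Φ : ℝ → ℝ) (ν : Measure X) (u : X → ℝ) : ℝ≥0∞ :=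
  sInf {d : ℝ≥0∞ | ∃ δ : ℝ, 0 < δ ∧ d = ENNReal.ofReal δ ∧
    (∫⁻ x, ENNReal.ofReal (Φ (|u x| / δ)) ∂ν) ≤ 1}

/-- An `N`-dimensional dynamical system on `Ω` preserving `μ`. -/
def IsDynSys {N : ℕ} {Ω : Type*} [MeasurableSpace Ω] (μ : Measure Ω)
    (T : (Fin N → ℝ) → Ω → Ω) : Prop :=
  T 0 = id ∧ (∀ x y : Fin N → ℝ, T (x + y) = T x ∘ T y) ∧
    (∀ x : Fin N → ℝ, MeasurePreserving (T x) μ μ) ∧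
    Measurable fun p : (Fin N → ℝ) × Ω => T p.1 p.2

/-- `ℤ^N`-periodicity. -/
def ZPeriodic {N : ℕ} (g : (Fin N → ℝ) → ℝ) : Prop :=
  ∀ (y : Fin N → ℝ) (k : Fin N → ℤ), g (y + fun i => (k i : ℝ)) = g y

/-- The unit cube `Y = [0,1]^N`. -/
def Ycube (N : ℕ) : Set (Fin N → ℝ) := Set.Icc 0 1

/-- `ℳ` is countably generated modulo `μ`-null sets. -/
def CountGenModNull {Ω : Type*} [MeasurableSpace Ω] (μ : Measure Ω) : Prop :=
  ∃ S : ℕ → Set Ω, (∀ n, MeasurableSet (S n)) ∧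
    ∀ A : Set Ω, MeasurableSet A →
      ∃ B : Set Ω, MeasurableSet[MeasurableSpace.generateFrom (Set.range S)] B ∧
        μ (symmDiff A B) = 0

/-- Weak stochastic two-scale convergence of `(u k)` to `u₀` along the sequence `(ε k)`. -/
def WeakStoch2Scale {N : ℕ} {Ω : Type*} [MeasurableSpace Ω] (μ : Measure Ω)
    (T : (Fin N → ℝ) → Ω → Ω) (Q : Set (Fin N → ℝ)) (ε : ℕ → ℝ)
    (u : ℕ → (Fin N → ℝ) → Ω → ℝ) (u₀ : (Fin N → ℝ) → Ω → (Fin N → ℝ) → ℝ) : Prop :=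
  ∀ φ : (Fin N → ℝ) → ℝ, ContDiff ℝ (⊤ : ℕ∞) φ → HasCompactSupport φ → tsupport φ ⊆ Q →
    ∀ ψ : Ω → ℝ, Measurable ψ → (∃ C : ℝ, ∀ ω, |ψ ω| ≤ C) →
      ∀ g : (Fin N → ℝ) → ℝ, Continuous g → ZPeriodic g →
        Tendsto
          (fun k => ∫ x in Q, (∫ ω, u k x ω * φ x * ψ (T ((ε k)⁻¹ • x) ω) *
              g (((ε k) ^ 2)⁻¹ • x) ∂μ))
          atTop
          (nhds (∫ x in Q, (∫ ω, (∫ y in Ycube N, u₀ x ω y * φ x * ψ ω * g y) ∂μ)))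

/-! Convolving with a kernel supported in a ball of radius `R` moves `f(x,ω,y,·)` at `v` by at most
its oscillation on that ball. As the supports shrink this tends to `0` by continuity. By the growth
bound it is at most a multiple of `1 + Φ(|v|)`, since `Δ₂` makes `Φ(t + s)` comparable to
`1 + Φ(t)` for fixed `s`. This majorant is integrable, so dominated convergence applies. -/

open Function Set Metric ContinuousLinearMap
open scoped Convolution

section AEJointlyMeasurable

variable {X S Z E β : Type*} [MeasurableSpace X] [MeasurableSpace S] [MeasurableSpace Z]
  [MeasurableSpace E] [MeasurableSpace β]

/-- For almost every parameter `x`, the function `g x` coincides everywhere with the section of a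
jointly measurable function. Unlike a.e. measurability for a product measure, this is meaningful
along the graph of a map `w : X → E`, which may be a null set of the product. -/
def AEJointlyMeasurable (g : X → E → β) (ν : Measure X) : Prop :=
  ∃ g' : X → E → β, Measurable (uncurry g') ∧ ∀ᵐ x ∂ν, g x = g' x

lemma aeJointlyMeasurable_of_ae_continuous [TopologicalSpace Z]
    [TopologicalSpace.MetrizableSpace Z] [SecondCountableTopology Z] [OpensMeasurableSpace Z]
    [TopologicalSpace β] [TopologicalSpace.PseudoMetrizableSpace β] [BorelSpace β] [Zero β]
    {π : Measure S} {F : S → Z → β} (hmeas : ∀ z, Measurable fun s => F s z)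
    (hcont : ∀ᵐ s ∂π, Continuous (F s)) : AEJointlyMeasurable F π := by
  set A : Set S := (toMeasurable π {s | ¬Continuous (F s)})ᶜ
  have hA : MeasurableSet A := (measurableSet_toMeasurable _ _).compl
  have hcontA : ∀ s ∈ A, Continuous (F s) := fun s hs => by
    by_contra h
    exact hs (subset_toMeasurable π _ h)
  have hAae : ∀ᵐ s ∂π, s ∈ A := by
    simpa only [A, ae_iff, mem_compl_iff, not_not, ofPred_mem_eq, measure_toMeasurable] using hcont
  have hmeasA : Measurable (uncurry fun z s => A.indicator (fun s => F s z) s) := by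
    refine measurable_uncurry_of_continuous_of_measurable (fun s => ?_)
      fun z => (hmeas z).indicator hA
    by_cases hs : s ∈ A
    · simpa only [indicator_of_mem hs] using hcontA s hs
    · simpa only [indicator_of_notMem hs] using continuous_const
  refine ⟨fun s z => A.indicator (fun s => F s z) s, hmeasA.comp measurable_swap, ?_⟩
  filter_upwards [hAae] with s hs
  simp only [indicator_of_mem hs]

namespace AEJointlyMeasurable

lemma comp_quasiMeasurePreserving {F : S → Z → β} {π : Measure S} (hF : AEJointlyMeasurable F π)
    {ν : Measure X} {s : X → S} (hs : Measure.QuasiMeasurePreserving s ν π) {k : X → E → Z}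
    (hk : Measurable (uncurry k)) : AEJointlyMeasurable (fun x e => F (s x) (k x e)) ν := by
  obtain ⟨F', hF', hFF'⟩ := hF
  refine ⟨fun x e => F' (s x) (k x e), hF'.comp ((hs.measurable.comp measurable_fst).prodMk hk), ?_⟩
  filter_upwards [hs.ae hFF'] with x hx
  simp only [hx]

lemma aemeasurable_graph {g : X → E → β} {ν : Measure X} (hg : AEJointlyMeasurable g ν)
    {w : X → E} (hw : Measurable w) : AEMeasurable (fun x => g x (w x)) ν := by
  obtain ⟨g', hg', hgg'⟩ := hg
  exact ⟨_, hg'.comp (measurable_id.prodMk hw), hgg'.mono fun x hx => congrFun hx (w x)⟩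

lemma aestronglyMeasurable_convolution_graph [AddGroup E] [MeasurableSub₂ E] {m : Measure E}
    [SFinite m] {φ : E → ℝ} (hφ : AEStronglyMeasurable φ m) {g : X → E → ℝ} {ν : Measure X}
    (hg : AEJointlyMeasurable g ν) {w : X → E} (hw : Measurable w) :
    AEStronglyMeasurable (fun x => (φ ⋆[lsmul ℝ ℝ, m] g x) (w x)) ν := by
  obtain ⟨g', hg', hgg'⟩ := hg
  have hg'w : Measurable fun q : X × E => g' q.1 (w q.1 - q.2) :=
    hg'.comp (measurable_fst.prodMk ((hw.comp measurable_fst).sub measurable_snd))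
  have hint : AEStronglyMeasurable (fun q : X × E => φ q.2 * g' q.1 (w q.1 - q.2)) (ν.prod m) :=
    hφ.comp_snd.mul hg'w.aestronglyMeasurable
  refine hint.integral_prod_right'.congr ?_
  filter_upwards [hgg'] with x hx
  simp only [hx, convolution_lsmul, smul_eq_mul]

end AEJointlyMeasurable

end AEJointlyMeasurable

section ApproxIdentity

variable {ι E : Type*} [SeminormedAddCommGroup E] [MeasurableSpace E]

/-- An approximate identity along `l` with respect to `m`: eventually nonnegative kernels of mass
one, whose supports shrink to the origin. -/
structure IsApproxIdentity (θ : ι → E → ℝ) (l : Filter ι) (m : Measure E) : Prop where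
  eventually_nonneg : ∀ᶠ i in l, ∀ η, 0 ≤ θ i η
  eventually_integral_eq_one : ∀ᶠ i in l, ∫ η, θ i η ∂m = 1
  tendsto_support : Tendsto (fun i => support (θ i)) l (𝓝 0).smallSets

namespace IsApproxIdentity

variable [BorelSpace E] [SecondCountableTopology E] {m : Measure E} [m.IsAddLeftInvariant]
  [SFinite m] {θ : ι → E → ℝ} {l : Filter ι}

lemma tendsto_abs_convolution_sub (hθ : IsApproxIdentity θ l m) {g : E → ℝ} (hg : Continuous g)
    (w : E) : Tendsto (fun i => |(θ i ⋆[lsmul ℝ ℝ, m] g) w - g w|) l (𝓝 0) := by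
  have hconv : Tendsto (fun i => (θ i ⋆[lsmul ℝ ℝ, m] g) w) l (𝓝 (g w)) :=
    convolution_tendsto_right hθ.eventually_nonneg hθ.eventually_integral_eq_one
      hθ.tendsto_support (.of_forall fun _ => hg.aestronglyMeasurable)
      ((hg.tendsto w).comp tendsto_snd) tendsto_const_nhds
  simpa only [sub_self, abs_zero] using (hconv.sub_const (g w)).abs

lemma eventually_abs_convolution_sub_le (hθ : IsApproxIdentity θ l m) {R : ℝ} (hR : 0 < R) :
    ∀ᶠ i in l, ∀ (g : E → ℝ) (w : E) (b : ℝ), Continuous g →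
      (∀ e ∈ ball w R, |g e - g w| ≤ b) → |(θ i ⋆[lsmul ℝ ℝ, m] g) w - g w| ≤ b := by
  filter_upwards [hθ.eventually_nonneg, hθ.eventually_integral_eq_one,
    tendsto_smallSets_iff.1 hθ.tendsto_support _ (ball_mem_nhds 0 hR)] with i hnonneg hone hsupp
  intro g w b hg hb
  have hb0 : 0 ≤ b := (abs_nonneg _).trans (hb w (mem_ball_self hR))
  exact dist_convolution_le hb0 hsupp hnonneg hone hg.aestronglyMeasurable hb

theorem tendsto_integral_abs_convolution_sub [l.IsCountablyGenerated]
    (hθ : IsApproxIdentity θ l m) {X : Type*} [MeasurableSpace X] {ν : Measure X}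
    {g : X → E → ℝ} (hgmeas : AEJointlyMeasurable g ν) (hgcont : ∀ᵐ x ∂ν, Continuous (g x))
    {w : X → E} (hw : Measurable w) {R : ℝ} (hR : 0 < R) {b : X → ℝ} (hb : Integrable b ν)
    (hgb : ∀ᵐ x ∂ν, ∀ e ∈ ball (w x) R, |g x e - g x (w x)| ≤ b x) :
    Tendsto (fun i => ∫ x, |(θ i ⋆[lsmul ℝ ℝ, m] g x) (w x) - g x (w x)| ∂ν) l (𝓝 0) := by
  rw [← integral_zero X ℝ (μ := ν)]
  refine tendsto_integral_filter_of_dominated_convergence b ?_ ?_ hb ?_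
  · filter_upwards [hθ.eventually_integral_eq_one] with i hone
    have hθi : AEStronglyMeasurable (θ i) m := (integrable_of_integral_eq_one hone).1
    exact ((hgmeas.aestronglyMeasurable_convolution_graph hθi hw).sub
      (hgmeas.aemeasurable_graph hw).aestronglyMeasurable).norm
  · filter_upwards [hθ.eventually_abs_convolution_sub_le hR] with i hi
    filter_upwards [hgcont, hgb] with x hcont hbound
    simpa only [Real.norm_eq_abs, abs_abs] using hi (g x) (w x) (b x) hcont hbound
  · filter_upwards [hgcont] with x hcont
    exact hθ.tendsto_abs_convolution_sub hcont (w x)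

end IsApproxIdentity

end ApproxIdentity

section EuclideanNorm

variable {N : ℕ}

lemma enorm2_eq_norm_toLp (v : Fin N → ℝ) : enorm2 v = ‖WithLp.toLp 2 v‖ := by
  simp only [enorm2, EuclideanSpace.norm_eq, Real.norm_eq_abs, sq_abs]

lemma enorm2_nonneg (v : Fin N → ℝ) : 0 ≤ enorm2 v := Real.sqrt_nonneg _

lemma enorm2_le_add_enorm2_sub (v w : Fin N → ℝ) : enorm2 v ≤ enorm2 w + enorm2 (v - w) := by
  simpa only [enorm2_eq_norm_toLp, WithLp.toLp_sub] using norm_le_norm_add_norm_sub' _ _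

lemma norm_le_enorm2 (v : Fin N → ℝ) : ‖v‖ ≤ enorm2 v := by
  rw [pi_norm_le_iff_of_nonneg (enorm2_nonneg v), enorm2_eq_norm_toLp]
  exact fun i => PiLp.norm_apply_le (WithLp.toLp 2 v) i

lemma continuous_enorm2 : Continuous (enorm2 (N := N)) := by
  unfold enorm2
  fun_prop

instance isFiniteMeasure_restrict_Ycube : IsFiniteMeasure (volume.restrict (Ycube N)) :=
  isFiniteMeasure_restrict.2 isCompact_Icc.measure_lt_top.ne

lemma isApproxIdentity_of_tsupport_subset_enorm2_le {θ : ℕ → (Fin N → ℝ) → ℝ}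
    {m : Measure (Fin N → ℝ)}
    (hnonneg : ∀ n, 1 ≤ n → ∀ η, 0 ≤ θ n η) (hone : ∀ n, 1 ≤ n → ∫ η, θ n η ∂m = 1)
    (hsupp : ∀ n : ℕ, 1 ≤ n → tsupport (θ n) ⊆ {η | enorm2 η ≤ 1 / (n : ℝ)}) :
    IsApproxIdentity θ atTop m where
  eventually_nonneg := (eventually_ge_atTop 1).mono hnonneg
  eventually_integral_eq_one := (eventually_ge_atTop 1).mono hone
  tendsto_support := by
    refine tendsto_smallSets_iff.2 fun U hU => ?_
    obtain ⟨δ, hδ, hδU⟩ := Metric.mem_nhds_iff.1 hU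
    filter_upwards [eventually_ge_atTop 1,
      tendsto_one_div_atTop_nhds_zero_nat.eventually (gt_mem_nhds hδ)] with n hn hnδ
    refine fun η hη => hδU (mem_ball_zero_iff.2 ?_)
    exact ((norm_le_enorm2 η).trans (hsupp n hn (subset_tsupport _ hη))).trans_lt hnδ

end EuclideanNorm

section YoungFunction

variable {Φ : ℝ → ℝ}

lemma IsYoung.monotoneOn (hΦ : IsYoung Φ) : MonotoneOn Φ (Ici 0) := by
  obtain ⟨-, hconv, hzero, -, hnonneg, -⟩ := hΦ
  intro s hs t ht hst
  have hs_mem : s ∈ segment ℝ 0 t := by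
    rw [segment_eq_Icc (hs.trans hst)]
    exact ⟨hs, hst⟩
  calc Φ s ≤ max (Φ 0) (Φ t) := hconv.le_on_segment self_mem_Ici ht hs_mem
    _ = Φ t := by rw [hzero, max_eq_right (hnonneg t ht)]

lemma Delta2.exists_apply_add_le (hΦ2 : Delta2 Φ) (hmono : MonotoneOn Φ (Ici 0)) (hzero : 0 ≤ Φ 0)
    {s : ℝ} (hs : 0 ≤ s) : ∃ C : ℝ, ∀ t, 0 ≤ t → Φ (t + s) ≤ C * (1 + Φ t) := by
  obtain ⟨α, hα, t₀, ht₀, hdouble⟩ := hΦ2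
  have hnonneg : ∀ t, 0 ≤ t → 0 ≤ Φ t := fun t ht => hzero.trans (hmono self_mem_Ici ht ht)
  set M := Φ (max t₀ s + s)
  have hM : 0 ≤ M := hnonneg _ (by positivity)
  refine ⟨α + M, fun t ht => ?_⟩
  have hΦt : 0 ≤ Φ t := hnonneg t ht
  have hαM : α * Φ t + M ≤ (α + M) * (1 + Φ t) := by nlinarith [mul_nonneg hM hΦt]
  rcases le_total t (max t₀ s) with hle | hge
  · calc Φ (t + s) ≤ M :=
          hmono (add_nonneg ht hs) (by simp only [mem_Ici]; positivity) (by gcongr)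
      _ ≤ α * Φ t + M := le_add_of_nonneg_left (by positivity)
      _ ≤ _ := hαM
  · calc Φ (t + s) ≤ Φ (2 * t) :=
          hmono (add_nonneg ht hs) (by simp only [mem_Ici]; positivity)
            (by linarith [(le_max_right t₀ s).trans hge])
      _ ≤ α * Φ t := hdouble t ((le_max_left _ _).trans hge)
      _ ≤ α * Φ t + M := le_add_of_nonneg_right hM
      _ ≤ _ := hαM

lemma measurable_comp_enorm2_of_monotoneOn {N : ℕ} (hmono : MonotoneOn Φ (Ici 0)) :
    Measurable fun e : Fin N → ℝ => Φ (enorm2 e) := by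
  have hext : Monotone fun t => Φ (max 0 t) := fun s t hst =>
    hmono (le_max_left 0 s) (le_max_left 0 t) (by gcongr)
  simpa only [comp_def, max_eq_right (enorm2_nonneg _)] using
    hext.measurable.comp (continuous_enorm2 (N := N)).measurable

lemma integrable_comp_enorm2 {N : ℕ} {X : Type*} [MeasurableSpace X] {ν : Measure X}
    {w : X → Fin N → ℝ} (hmono : MonotoneOn Φ (Ici 0)) (hzero : 0 ≤ Φ 0) (hw : Measurable w)
    (hint : ∫⁻ x, ENNReal.ofReal (Φ (enorm2 (w x))) ∂ν < ⊤) :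
    Integrable (fun x => Φ (enorm2 (w x))) ν := by
  refine ⟨((measurable_comp_enorm2_of_monotoneOn hmono).comp hw).aestronglyMeasurable, ?_⟩
  rwa [hasFiniteIntegral_iff_ofReal (.of_forall fun x => hzero.trans
    (hmono self_mem_Ici (enorm2_nonneg _) (enorm2_nonneg _)))]

lemma exists_abs_sub_le_of_abs_le_growth (N : ℕ) (hmono : MonotoneOn Φ (Ici 0)) (hzero : 0 ≤ Φ 0)
    (hΦ2 : Delta2 Φ) (c : ℝ) : ∃ (R C : ℝ), 0 < R ∧ ∀ g : (Fin N → ℝ) → ℝ,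
      (∀ e, |g e| ≤ c * (1 + Φ (enorm2 e))) →
      ∀ w, ∀ e ∈ ball w R, |g e - g w| ≤ C * (1 + Φ (enorm2 w)) := by
  obtain ⟨C, hshift⟩ := hΦ2.exists_apply_add_le hmono hzero zero_le_one
  obtain ⟨R, hR, hball⟩ : ∃ R > 0, ∀ η : Fin N → ℝ, ‖η‖ < R → enorm2 η < 1 := by
    have hsmall : ∀ᶠ η : Fin N → ℝ in 𝓝 0, enorm2 η < 1 :=
      continuous_enorm2.tendsto' 0 0 (by simp [enorm2]) |>.eventually (gt_mem_nhds one_pos)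
    simpa only [dist_zero_right] using Metric.eventually_nhds_iff.1 hsmall
  refine ⟨R, c * (2 + C), hR, fun g hg w e he => ?_⟩
  have hnonneg : ∀ u : Fin N → ℝ, 0 ≤ Φ (enorm2 u) := fun u =>
    hzero.trans (hmono self_mem_Ici (enorm2_nonneg u) (enorm2_nonneg u))
  have hc : 0 ≤ c := nonneg_of_mul_nonneg_left ((abs_nonneg _).trans (hg w))
    (add_pos_of_pos_of_nonneg one_pos (hnonneg w))
  have hΦe : Φ (enorm2 e) ≤ C * (1 + Φ (enorm2 w)) := by
    refine (hmono (enorm2_nonneg e) (add_nonneg (enorm2_nonneg w) zero_le_one) ?_).trans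
      (hshift _ (enorm2_nonneg w))
    have := hball (e - w) (mem_ball_iff_norm.1 he)
    linarith [enorm2_le_add_enorm2_sub e w]
  calc |g e - g w| ≤ |g e| + |g w| := abs_sub _ _
    _ ≤ c * (1 + C * (1 + Φ (enorm2 w))) + c * (1 + Φ (enorm2 w)) := by
      gcongr
      · exact (hg e).trans (by gcongr)
      · exact hg w
    _ ≤ c * (2 + C) * (1 + Φ (enorm2 w)) := by nlinarith [mul_nonneg hc (hnonneg w)]

end YoungFunction

section Integrand

variable {X Ω Y E : Type*} [MeasurableSpace Ω] [MeasurableSpace Y] {μ : Measure Ω}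
  {f : X → Ω → Y → E → ℝ}

lemma ae_prod_continuous_of_ae_continuous [TopologicalSpace X] [TopologicalSpace Y]
    [TopologicalSpace E] {σ : Measure Y}
    (hf : ∀ᵐ ω ∂μ, Continuous fun q : X × Y × E => f q.1 ω q.2.1 q.2.2) :
    ∀ᵐ p ∂μ.prod σ, Continuous fun q : X × E => f q.1 p.1 p.2 q.2 :=
  (Measure.quasiMeasurePreserving_fst.ae hf).mono fun p hp =>
    hp.comp (by fun_prop : Continuous fun q : X × E => (q.1, p.2, q.2))

lemma ae_abs_le_of_ae_growth {σ τ : Measure Y} [SFinite σ] (hτσ : τ ≪ σ)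
    {lower upper : E → ℝ} (hlower : ∀ e, 0 ≤ lower e)
    (hf : ∀ᵐ p ∂μ.prod σ, ∀ x e, lower e ≤ f x p.1 p.2 e ∧ f x p.1 p.2 e ≤ upper e) :
    ∀ᵐ p ∂μ.prod τ, ∀ x e, |f x p.1 p.2 e| ≤ upper e := by
  filter_upwards [(Measure.AbsolutelyContinuous.rfl.prod hτσ).ae_le hf] with p hp x e
  rw [abs_of_nonneg ((hlower e).trans (hp x e).1)]
  exact (hp x e).2

end Integrand

theorem stmt8_general {N : ℕ} {X Ω Y : Type*} [TopologicalSpace X]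
    [TopologicalSpace.MetrizableSpace X] [SecondCountableTopology X] [MeasurableSpace X]
    [OpensMeasurableSpace X] [MeasurableSpace Ω] [MeasurableSpace Y] (ρ : Measure X) (μ : Measure Ω)
    (σ : Measure Y) [IsFiniteMeasure ρ] [IsFiniteMeasure μ] [IsFiniteMeasure σ] {Φ : ℝ → ℝ}
    (hΦmono : MonotoneOn Φ (Ici 0)) (hΦzero : 0 ≤ Φ 0) (hΦ2 : Delta2 Φ)
    {f : X → Ω → Y → (Fin N → ℝ) → ℝ}
    (hfmeas : ∀ x lam, Measurable fun p : Ω × Y => f x p.1 p.2 lam)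
    (hfcont : ∀ᵐ p ∂μ.prod σ, Continuous fun q : X × (Fin N → ℝ) => f q.1 p.1 p.2 q.2) {c : ℝ}
    (hfgrowth : ∀ᵐ p ∂μ.prod σ, ∀ x lam, |f x p.1 p.2 lam| ≤ c * (1 + Φ (enorm2 lam)))
    {ι : Type*} {l : Filter ι} [l.IsCountablyGenerated] {θ : ι → (Fin N → ℝ) → ℝ}
    (hθ : IsApproxIdentity θ l volume) {v : X → Ω → Y → Fin N → ℝ}
    (hvmeas : Measurable fun p : (X × Ω) × Y => v p.1.1 p.1.2 p.2)
    (hvint : ∫⁻ p, ENNReal.ofReal (Φ (enorm2 (v p.1.1 p.1.2 p.2))) ∂((ρ.prod μ).prod σ) < ⊤) :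
    Tendsto
      (fun i => ∫ p, |(∫ η, θ i η * f p.1.1 p.1.2 p.2 (v p.1.1 p.1.2 p.2 - η)) -
        f p.1.1 p.1.2 p.2 (v p.1.1 p.1.2 p.2)| ∂((ρ.prod μ).prod σ))
      l (𝓝 0) := by
  have hproj : Measure.QuasiMeasurePreserving (Prod.map Prod.snd id)
      ((ρ.prod μ).prod σ) (μ.prod σ) :=
    QuasiMeasurePreserving.prodMap Measure.quasiMeasurePreserving_snd (.id σ)
  have hmeas : AEJointlyMeasurable
      (fun (p : (X × Ω) × Y) lam => f p.1.1 p.1.2 p.2 lam) ((ρ.prod μ).prod σ) :=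
    (aeJointlyMeasurable_of_ae_continuous (F := fun (p : Ω × Y) (q : X × (Fin N → ℝ)) =>
      f q.1 p.1 p.2 q.2) (fun q => hfmeas q.1 q.2) hfcont).comp_quasiMeasurePreserving
      (k := fun p lam => (p.1.1, lam)) hproj (by fun_prop)
  have hcont : ∀ᵐ p ∂(ρ.prod μ).prod σ, Continuous (f p.1.1 p.1.2 p.2) :=
    (hproj.ae hfcont).mono fun p hp => hp.comp (Continuous.prodMk_right p.1.1)
  obtain ⟨R, C, hR, hosc⟩ := exists_abs_sub_le_of_abs_le_growth N hΦmono hΦzero hΦ2 c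
  have hmajorant := ((integrable_const 1).add
    (integrable_comp_enorm2 hΦmono hΦzero hvmeas hvint)).const_mul C
  exact hθ.tendsto_integral_abs_convolution_sub hmeas hcont hvmeas hR hmajorant
    ((hproj.ae hfgrowth).mono fun p hp => hosc _ (hp p.1.1) _)

/-- L¹ convergence of the mollified integrands along Orlicz-bounded fields. -/
theorem stmt8 {N : ℕ} (hN : 1 ≤ N) {Ω : Type*} [MeasurableSpace Ω] (μ : Measure Ω)
    [IsProbabilityMeasure μ]
    (Φ : ℝ → ℝ) (hΦ : IsYoung Φ) (hΦ2 : Delta2 Φ)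
    (Q : Set (Fin N → ℝ)) (hQo : IsOpen Q) (hQb : Bornology.IsBounded Q)
    (f : (Fin N → ℝ) → Ω → (Fin N → ℝ) → (Fin N → ℝ) → ℝ)
    (hfmeas : ∀ x lam : Fin N → ℝ, Measurable fun p : Ω × (Fin N → ℝ) => f x p.1 p.2 lam)
    (hfcont : ∀ᵐ ω ∂μ, Continuous fun q : (Fin N → ℝ) × (Fin N → ℝ) × (Fin N → ℝ) =>
      f q.1 ω q.2.1 q.2.2)
    (hH1 : ∃ ϖ : ℝ → ℝ, Continuous ϖ ∧ ϖ 0 = 0 ∧ (∀ t, 0 ≤ ϖ t) ∧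
      ∃ a : (Fin N → ℝ) → ℝ, LocallyIntegrable a volume ∧
        ∀ᵐ p ∂(μ.prod (volume : Measure (Fin N → ℝ))), ∀ x x' lam : Fin N → ℝ,
          |f x p.1 p.2 lam - f x' p.1 p.2 lam| ≤ ϖ (enorm2 (x - x')) * (a p.2 + f x p.1 p.2 lam))
    (hH2 : ∀ᵐ p ∂(μ.prod (volume : Measure (Fin N → ℝ))), ∀ x : Fin N → ℝ,
      StrictConvexOn ℝ Set.univ (f x p.1 p.2))
    (c₁ c₂ : ℝ) (hc₁ : 0 < c₁) (hc₂ : 0 < c₂)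
    (hH3 : ∀ᵐ p ∂(μ.prod (volume : Measure (Fin N → ℝ))), ∀ x lam : Fin N → ℝ,
      c₁ * Φ (enorm2 lam) ≤ f x p.1 p.2 lam ∧ f x p.1 p.2 lam ≤ c₂ * (1 + Φ (enorm2 lam)))
    (hH4 : ∀ᵐ ω ∂μ, ∀ (x y lam : Fin N → ℝ) (k : Fin N → ℤ),
      f x ω (y + fun i => (k i : ℝ)) lam = f x ω y lam)
    (θ : ℕ → (Fin N → ℝ) → ℝ)
    (hθ : ∀ n : ℕ, 1 ≤ n → ContDiff ℝ (⊤ : ℕ∞) (θ n) ∧ HasCompactSupport (θ n) ∧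
      (∀ η, 0 ≤ θ n η) ∧ tsupport (θ n) ⊆ {η : Fin N → ℝ | enorm2 η ≤ 1 / (n : ℝ)} ∧
      (∫ η, θ n η) = 1)
    (v : (Fin N → ℝ) → Ω → (Fin N → ℝ) → Fin N → ℝ)
    (hvmeas : Measurable fun p : ((Fin N → ℝ) × Ω) × (Fin N → ℝ) => v p.1.1 p.1.2 p.2)
    (hvper : ∀ (x : Fin N → ℝ) (ω : Ω) (y : Fin N → ℝ) (k : Fin N → ℤ),
      v x ω (y + fun i => (k i : ℝ)) = v x ω y)
    (hvint : (∫⁻ p, ENNReal.ofReal (Φ (enorm2 (v p.1.1 p.1.2 p.2)))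
      ∂(((volume.restrict Q).prod μ).prod (volume.restrict (Ycube N)))) < ⊤) :
    Tendsto
      (fun n : ℕ => ∫ p,
        |(∫ η, θ n η * f p.1.1 p.1.2 p.2 (v p.1.1 p.1.2 p.2 - η)) -
            f p.1.1 p.1.2 p.2 (v p.1.1 p.1.2 p.2)|
        ∂(((volume.restrict Q).prod μ).prod (volume.restrict (Ycube N))))
      atTop (nhds 0) := by
  have : IsFiniteMeasure (volume.restrict Q) := isFiniteMeasure_restrict.2 hQb.measure_lt_top.ne
  exact stmt8_general _ μ _ hΦ.monotoneOn hΦ.2.2.1.ge hΦ2 hfmeas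
    (ae_prod_continuous_of_ae_continuous hfcont)
    (ae_abs_le_of_ae_growth Measure.restrict_le_self.absolutelyContinuous
      (fun lam => mul_nonneg hc₁.le (hΦ.2.2.2.2.1 _ (enorm2_nonneg lam))) hH3)
    (isApproxIdentity_of_tsupport_subset_enorm2_le (fun n hn => (hθ n hn).2.2.1)
      (fun n hn => (hθ n hn).2.2.2.2) fun n hn => (hθ n hn).2.2.2.1) hvmeas hvint
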